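/- Let A be a nonnegatively filtered algebra over a field, with central elements z_1,...,z_n whose top symbols form a regular sequence in the commutative associated graded algebra Gr A. If Gr A modulo the ideal generated by the top symbols Gr z_1,...,Gr z_n is an integral domain, then A/(z_1,...,z_n) is an integral domain. -/

import Mathlib

/-- A nonnegative exhaustive algebra filtration `F₀ ⊆ F₁ ⊆ ⋯` on a `k`-algebra `A`,
with `1 ∈ F₀` and `Fᵢ · Fⱼ ⊆ F_{i+j}`. -/
structure AlgFiltration (k A : Type*) [Field k] [Ring A] [Algebra k A] where
  F : ℕ → Submodule k A
  mono : Monotone F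
  one_mem : (1 : A) ∈ F 0
  mul_mem : ∀ {i j : ℕ} {a b : A}, a ∈ F i → b ∈ F j → a * b ∈ F (i + j)
  exhaustive : ∀ a : A, ∃ i, a ∈ F i

namespace AlgFiltration

variable {k A : Type*} [Field k] [Ring A] [Algebra k A]

/-- `prev i` is `F (i-1)`, with the convention `F (-1) = 0`. -/
def prev (𝓕 : AlgFiltration k A) (i : ℕ) : Submodule k A :=
  if i = 0 then ⊥ else 𝓕.F (i - 1)

/-- The associated graded algebra `Gr A` is commutative. -/
def GrComm (𝓕 : AlgFiltration k A) : Prop :=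
  ∀ {i j : ℕ} {a b : A}, a ∈ 𝓕.F i → b ∈ 𝓕.F j → a * b - b * a ∈ 𝓕.prev (i + j)

/-- The degree-`i` part of the ideal of `Gr A` generated by the top symbols
`Gr z_j` (`j < l`), pulled back to `F i`. -/
def symIdeal (𝓕 : AlgFiltration k A) {n : ℕ} (z : Fin n → A) (d : Fin n → ℕ)
    (l i : ℕ) : Submodule k A :=
  (⨆ (j : Fin n) (_ : (j : ℕ) < l) (_ : d j ≤ i),
      (𝓕.F (i - d j)).map (LinearMap.mulRight k (z j))) ⊔ 𝓕.prev i

end AlgFiltration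

/-!
Write `I = (z₁, …, zₙ)`. Regularity of the top symbols forces `Gr I = (Gr z₁, …, Gr zₙ)`: if the
top symbols cancel in an expression `a * z_l + y` with `y ∈ (z₁, …, z_{l-1})`, then the symbol
of `a` is killed by `Gr z_l` modulo the earlier symbols, hence lies in the ideal they generate, and
`a` may be replaced by an element of smaller degree. After finitely many steps no cancellation is
left. So `Gr (A/I) = Gr A / (Gr z₁, …, Gr zₙ)` is a domain, and therefore so is `A/I`: a product of
two elements outside `I`, taken of least degree modulo `I`, has nonzero symbol in `Gr (A/I)`.
-/

section PartialSpan

variable {A : Type*} [Semiring A] {n : ℕ} {z : Fin n → A}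

/-- The left ideal `(z₁, …, z_l)` generated by the first `l` terms of the sequence `z`. -/
def partialSpan (z : Fin n → A) (l : ℕ) : Ideal A :=
  Ideal.span (z '' {j | (j : ℕ) < l})

theorem partialSpan_zero (z : Fin n → A) : partialSpan z 0 = ⊥ := by
  simp [partialSpan]

theorem partialSpan_length (z : Fin n → A) : partialSpan z n = Ideal.span (Set.range z) := by
  simp [partialSpan]

theorem mul_mem_partialSpan (z : Fin n → A) {l : ℕ} {j : Fin n} (hj : (j : ℕ) < l) (a : A) :
    a * z j ∈ partialSpan z l :=
  Ideal.mul_mem_left _ a (Ideal.subset_span (Set.mem_image_of_mem z hj))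

theorem mem_partialSpan_succ {l : Fin n} {x : A} :
    x ∈ partialSpan z (l + 1) ↔ ∃ a, ∃ y ∈ partialSpan z l, x = a * z l + y := by
  have indices_succ : {j : Fin n | (j : ℕ) < l + 1} = insert l {j : Fin n | (j : ℕ) < l} := by
    ext j
    simp only [Set.mem_ofPred_eq, Set.mem_insert_iff, Fin.ext_iff]
    omega
  rw [partialSpan, indices_succ, Set.image_insert_eq]
  exact Ideal.mem_span_insert

theorem isTwoSided_span_of_central {s : Set A} (hs : ∀ x ∈ s, ∀ a, x * a = a * x) :
    (Ideal.span s).IsTwoSided where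
  mul_mem_of_left b hx := by
    induction hx using Submodule.span_induction with
    | mem x hx => exact hs x hx b ▸ Ideal.mul_mem_left _ b (Ideal.subset_span hx)
    | zero => exact (zero_mul b).symm ▸ zero_mem _
    | add x y _ _ hx hy => exact (add_mul x y b).symm ▸ add_mem hx hy
    | smul a x _ hx => exact (mul_assoc a x b).symm ▸ Ideal.mul_mem_left _ a hx

theorem isTwoSided_partialSpan (hz : ∀ (j : Fin n) (a : A), z j * a = a * z j) (l : ℕ) :
    (partialSpan z l).IsTwoSided :=
  isTwoSided_span_of_central (Set.forall_mem_image.mpr fun j _ => hz j)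

end PartialSpan

namespace AlgFiltration

variable {k A : Type*} [Field k] [Ring A] [Algebra k A] (𝓕 : AlgFiltration k A)

theorem prev_zero : 𝓕.prev 0 = ⊥ :=
  if_pos rfl

theorem prev_succ (i : ℕ) : 𝓕.prev (i + 1) = 𝓕.F i :=
  if_neg i.succ_ne_zero

theorem F_le_prev {i m : ℕ} (h : i < m) : 𝓕.F i ≤ 𝓕.prev m := by
  obtain ⟨m, rfl⟩ := Nat.exists_eq_add_one_of_ne_zero (Nat.ne_zero_of_lt h)
  rw [prev_succ]
  exact 𝓕.mono (Nat.le_of_lt_succ h)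

section GrIdeal

/-- The degree-`i` part of `Gr I`, the ideal of symbols of elements of `I`, pulled back to `F i`. -/
def grIdeal (I : Ideal A) (i : ℕ) : Submodule k A :=
  I.restrictScalars k ⊓ 𝓕.F i ⊔ 𝓕.prev i

theorem mem_grIdeal_of_mem {I : Ideal A} {i : ℕ} {a : A} (ha : a ∈ I) (hai : a ∈ 𝓕.F i) :
    a ∈ 𝓕.grIdeal I i :=
  Submodule.mem_sup_left ⟨ha, hai⟩

theorem exists_sub_mem_notMem_grIdeal {I : Ideal A} {a : A} (ha : a ∉ I) :
    ∃ (i : ℕ) (a' : A), a - a' ∈ I ∧ a' ∈ 𝓕.F i ∧ a' ∉ 𝓕.grIdeal I i := by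
  let J := I.restrictScalars k
  have notMem_zero : a ∉ J ⊔ 𝓕.prev 0 := by
    rwa [prev_zero, sup_bot_eq]
  have exists_mem : ∃ m, a ∈ J ⊔ 𝓕.prev m := by
    obtain ⟨i, hi⟩ := 𝓕.exhaustive a
    exact ⟨i + 1, Submodule.mem_sup_right (𝓕.prev_succ i ▸ hi)⟩
  obtain ⟨i, notMem_prev, mem_succ⟩ :=
    Nat.exists_not_and_succ_of_not_zero_of_exists notMem_zero exists_mem
  rw [prev_succ] at mem_succ
  obtain ⟨u, hu, a', ha', rfl⟩ := Submodule.mem_sup.mp mem_succ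
  refine ⟨i, a', (add_sub_cancel_right u a').symm ▸ hu, ha', fun ha'_gr => notMem_prev ?_⟩
  have grIdeal_le : 𝓕.grIdeal I i ≤ J ⊔ 𝓕.prev i := sup_le_sup_right inf_le_left _
  exact add_mem (Submodule.mem_sup_left hu) (grIdeal_le ha'_gr)

theorem mem_or_mem_of_mul_mem_of_grIdeal (I : Ideal A) [I.IsTwoSided]
    (hdom : ∀ {i j : ℕ} {a b : A}, a ∈ 𝓕.F i → b ∈ 𝓕.F j →
      a ∉ 𝓕.grIdeal I i → b ∉ 𝓕.grIdeal I j → a * b ∉ 𝓕.grIdeal I (i + j))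
    {a b : A} (hab : a * b ∈ I) : a ∈ I ∨ b ∈ I := by
  by_contra! h
  obtain ⟨i, a', haa', ha', ha'_gr⟩ := 𝓕.exists_sub_mem_notMem_grIdeal h.1
  obtain ⟨j, b', hbb', hb', hb'_gr⟩ := 𝓕.exists_sub_mem_notMem_grIdeal h.2
  have hab' : a' * b' ∈ I :=
    (Submodule.sub_mem_iff_right I hab).mp (I.mul_sub_mul_mem haa' hbb')
  exact hdom ha' hb' ha'_gr hb'_gr (𝓕.mem_grIdeal_of_mem hab' (𝓕.mul_mem ha' hb'))

end GrIdeal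

section BoundedSpan

variable {n : ℕ} {z : Fin n → A} {d : Fin n → ℕ}

/-- The sums `∑ aⱼ zⱼ` over `j < l` in which every `aⱼ` has filtration degree at most `i - d j`,
so that no cancellation takes place above degree `i`. -/
def boundedSpan (z : Fin n → A) (d : Fin n → ℕ) (l i : ℕ) : Submodule k A :=
  ⨆ (j : Fin n) (_ : (j : ℕ) < l) (_ : d j ≤ i),
    (𝓕.F (i - d j)).map (LinearMap.mulRight k (z j))

theorem symIdeal_eq_boundedSpan_sup_prev (z : Fin n → A) (d : Fin n → ℕ) (l i : ℕ) :
    𝓕.symIdeal z d l i = 𝓕.boundedSpan z d l i ⊔ 𝓕.prev i :=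
  rfl

theorem boundedSpan_le_inf (hzF : ∀ j, z j ∈ 𝓕.F (d j)) (l i : ℕ) :
    𝓕.boundedSpan z d l i ≤ (partialSpan z l).restrictScalars k ⊓ 𝓕.F i := by
  refine iSup_le fun j => iSup_le fun hj => iSup_le fun hdj => ?_
  rintro _ ⟨a, ha, rfl⟩
  exact ⟨mul_mem_partialSpan z hj a, Nat.sub_add_cancel hdj ▸ 𝓕.mul_mem ha (hzF j)⟩

theorem boundedSpan_mono (z : Fin n → A) (d : Fin n → ℕ) {l l' : ℕ} (h : l ≤ l') (i : ℕ) :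
    𝓕.boundedSpan z d l i ≤ 𝓕.boundedSpan z d l' i :=
  iSup_mono fun _ => iSup_le fun hj => le_iSup_of_le (hj.trans_le h) le_rfl

theorem mul_mem_boundedSpan (z : Fin n → A) (d : Fin n → ℕ) {l m i : ℕ} {j : Fin n}
    (hj : (j : ℕ) < l) (hi : m + d j ≤ i) {a : A} (ha : a ∈ 𝓕.F m) :
    a * z j ∈ 𝓕.boundedSpan z d l i :=
  Submodule.mem_iSup_of_mem j <| Submodule.mem_iSup_of_mem hj <|
    Submodule.mem_iSup_of_mem (le_of_add_le_right hi)
      ⟨a, 𝓕.mono (Nat.le_sub_of_add_le hi) ha, rfl⟩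

theorem exists_mem_prev_of_cancellation {l : Fin n} [(partialSpan z l).IsTwoSided]
    (hzF : ∀ j, z j ∈ 𝓕.F (d j))
    (hreg : ∀ (i : ℕ), ∀ a ∈ 𝓕.F i,
      a * z l ∈ 𝓕.symIdeal z d l (i + d l) → a ∈ 𝓕.symIdeal z d l i)
    (hstrict : ∀ i, (partialSpan z l).restrictScalars k ⊓ 𝓕.F i ≤ 𝓕.boundedSpan z d l i)
    {m i : ℕ} (him : i < m + d l) {a y : A} (ha : a ∈ 𝓕.F m) (hy : y ∈ partialSpan z l)
    (hi : a * z l + y ∈ 𝓕.F i) :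
    ∃ a' ∈ 𝓕.prev m, ∃ y' ∈ partialSpan z l, a * z l + y = a' * z l + y' := by
  have haz : a * z l ∈ 𝓕.F (m + d l) := 𝓕.mul_mem ha (hzF l)
  have hyF : y ∈ 𝓕.F (m + d l) := (add_mem_cancel_left haz).mp (𝓕.mono him.le hi)
  have haz_sym : a * z l ∈ 𝓕.symIdeal z d l (m + d l) :=
    (add_mem_cancel_right (Submodule.mem_sup_left (hstrict _ ⟨hy, hyF⟩))).mp
      (Submodule.mem_sup_right (𝓕.F_le_prev him hi))
  obtain ⟨u, hu, a', ha', rfl⟩ := Submodule.mem_sup.mp (hreg m a ha haz_sym)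
  have hu_span : u ∈ partialSpan z l := (𝓕.boundedSpan_le_inf hzF l m hu).1
  refine ⟨a', ha', u * z l + y, add_mem (Ideal.mul_mem_right _ _ hu_span) hy, ?_⟩
  rw [add_mul, add_assoc, add_left_comm]

theorem mul_add_mem_boundedSpan_succ {l : Fin n} [(partialSpan z l).IsTwoSided]
    (hzF : ∀ j, z j ∈ 𝓕.F (d j))
    (hreg : ∀ (i : ℕ), ∀ a ∈ 𝓕.F i,
      a * z l ∈ 𝓕.symIdeal z d l (i + d l) → a ∈ 𝓕.symIdeal z d l i)
    (hstrict : ∀ i, (partialSpan z l).restrictScalars k ⊓ 𝓕.F i ≤ 𝓕.boundedSpan z d l i)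
    {m i : ℕ} {a y : A} (ha : a ∈ 𝓕.prev m) (hy : y ∈ partialSpan z l)
    (hi : a * z l + y ∈ 𝓕.F i) :
    a * z l + y ∈ 𝓕.boundedSpan z d (l + 1) i := by
  have mem_of_mem_span {x : A} (hx : x ∈ partialSpan z l) (hxi : x ∈ 𝓕.F i) :
      x ∈ 𝓕.boundedSpan z d (l + 1) i :=
    𝓕.boundedSpan_mono z d (Nat.le_succ l) i (hstrict i ⟨hx, hxi⟩)
  induction m generalizing a y with
  | zero =>
    obtain rfl : a = 0 := by rwa [prev_zero, Submodule.mem_bot] at ha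
    rw [zero_mul, zero_add] at hi ⊢
    exact mem_of_mem_span hy hi
  | succ m ih =>
    rw [prev_succ] at ha
    obtain hmi | him := le_or_gt (m + d l) i
    · have haz : a * z l ∈ 𝓕.F i := 𝓕.mono hmi (𝓕.mul_mem ha (hzF l))
      exact add_mem (𝓕.mul_mem_boundedSpan z d (Nat.lt_succ_self l) hmi ha)
        (mem_of_mem_span hy ((add_mem_cancel_left haz).mp hi))
    · obtain ⟨a', ha', y', hy', heq⟩ :=
        𝓕.exists_mem_prev_of_cancellation hzF hreg hstrict him ha hy hi
      rw [heq] at hi ⊢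
      exact ih ha' hy' hi

theorem partialSpan_inf_F_eq_boundedSpan (htwo : ∀ l, (partialSpan z l).IsTwoSided)
    (hzF : ∀ j, z j ∈ 𝓕.F (d j))
    (hreg : ∀ (l : Fin n) (i : ℕ), ∀ a ∈ 𝓕.F i,
      a * z l ∈ 𝓕.symIdeal z d l (i + d l) → a ∈ 𝓕.symIdeal z d l i)
    {l : ℕ} (hl : l ≤ n) (i : ℕ) :
    (partialSpan z l).restrictScalars k ⊓ 𝓕.F i = 𝓕.boundedSpan z d l i := by
  refine le_antisymm ?_ (𝓕.boundedSpan_le_inf hzF l i)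
  induction l generalizing i with
  | zero => simp [partialSpan_zero]
  | succ l ih =>
    rintro x ⟨hx, hxi⟩
    let t : Fin n := ⟨l, hl⟩
    obtain ⟨a, y, hy, rfl⟩ := (mem_partialSpan_succ (l := t)).mp hx
    obtain ⟨m, ha⟩ := 𝓕.exhaustive a
    have : (partialSpan z t).IsTwoSided := htwo l
    exact 𝓕.mul_add_mem_boundedSpan_succ hzF (hreg t) (ih (Nat.le_of_succ_le hl))
      (𝓕.F_le_prev m.lt_succ_self ha) hy hxi

theorem symIdeal_eq_grIdeal (htwo : ∀ l, (partialSpan z l).IsTwoSided)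
    (hzF : ∀ j, z j ∈ 𝓕.F (d j))
    (hreg : ∀ (l : Fin n) (i : ℕ), ∀ a ∈ 𝓕.F i,
      a * z l ∈ 𝓕.symIdeal z d l (i + d l) → a ∈ 𝓕.symIdeal z d l i) (i : ℕ) :
    𝓕.symIdeal z d n i = 𝓕.grIdeal (Ideal.span (Set.range z)) i := by
  rw [symIdeal_eq_boundedSpan_sup_prev, grIdeal, ← partialSpan_length,
    𝓕.partialSpan_inf_F_eq_boundedSpan htwo hzF hreg le_rfl]

end BoundedSpan

end AlgFiltration

theorem quotient_domain_of_gr_domain_general {k A : Type*} [Field k] [Ring A] [Algebra k A]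
    (𝓕 : AlgFiltration k A) (n : ℕ) (z : Fin n → A) (d : Fin n → ℕ)
    (htwo : ∀ l, (partialSpan z l).IsTwoSided)
    (hzF : ∀ j, z j ∈ 𝓕.F (d j))
    (hreg : ∀ (l : Fin n) (i : ℕ), ∀ a ∈ 𝓕.F i,
      a * z l ∈ 𝓕.symIdeal z d l (i + d l) → a ∈ 𝓕.symIdeal z d l i)
    (hdom : ∀ {i j : ℕ} {a b : A}, a ∈ 𝓕.F i → b ∈ 𝓕.F j →
      a ∉ 𝓕.symIdeal z d n i → b ∉ 𝓕.symIdeal z d n j →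
      a * b ∉ 𝓕.symIdeal z d n (i + j))
    (hnontriv : (1 : A) ∉ 𝓕.symIdeal z d n 0) :
    (∀ a b : A, a * b ∈ Ideal.span (Set.range z) →
      a ∈ Ideal.span (Set.range z) ∨ b ∈ Ideal.span (Set.range z)) ∧
    (1 : A) ∉ Ideal.span (Set.range z) := by
  simp only [𝓕.symIdeal_eq_grIdeal htwo hzF hreg] at hdom hnontriv
  have : (Ideal.span (Set.range z)).IsTwoSided := partialSpan_length z ▸ htwo n
  exact ⟨fun _ _ => 𝓕.mem_or_mem_of_mul_mem_of_grIdeal _ hdom,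
    fun one_mem => hnontriv (𝓕.mem_grIdeal_of_mem one_mem 𝓕.one_mem)⟩

/-- Let `A` be a nonnegatively filtered algebra over a field with central elements
`z₁, …, zₙ` whose top symbols form a regular sequence in the commutative associated graded
algebra `Gr A`.  If `Gr A` modulo the ideal generated by the top symbols is an integral
domain, then `A/(z₁, …, zₙ)` is an integral domain. -/
theorem quotient_domain_of_gr_domain {k A : Type*} [Field k] [Ring A] [Algebra k A]
    (𝓕 : AlgFiltration k A) (hcomm : 𝓕.GrComm)
    (n : ℕ) (z : Fin n → A) (d : Fin n → ℕ)
    (hzc : ∀ (j : Fin n) (a : A), z j * a = a * z j)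
    (hzF : ∀ j, z j ∈ 𝓕.F (d j)) (hzd : ∀ j, z j ∉ 𝓕.prev (d j))
    -- the top symbols form a regular sequence in `Gr A`
    (hreg : ∀ (l : Fin n) (i : ℕ), ∀ a ∈ 𝓕.F i,
      a * z l ∈ 𝓕.symIdeal z d l (i + d l) → a ∈ 𝓕.symIdeal z d l i)
    -- `Gr A / (Gr z₁, …, Gr zₙ)` is an integral domain:
    (hdom : ∀ {i j : ℕ} {a b : A}, a ∈ 𝓕.F i → b ∈ 𝓕.F j →
      a ∉ 𝓕.symIdeal z d n i → b ∉ 𝓕.symIdeal z d n j →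
      a * b ∉ 𝓕.symIdeal z d n (i + j))
    (hnontriv : (1 : A) ∉ 𝓕.symIdeal z d n 0) :
    -- then `A/(z₁, …, zₙ)` is an integral domain:
    (∀ a b : A, a * b ∈ Ideal.span (Set.range z) →
      a ∈ Ideal.span (Set.range z) ∨ b ∈ Ideal.span (Set.range z)) ∧
    (1 : A) ∉ Ideal.span (Set.range z) := by
  exact quotient_domain_of_gr_domain_general 𝓕 n z d (isTwoSided_partialSpan hzc) hzF hreg hdom
    hnontriv
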